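/- The 6×6 integer matrix A_{3,II} with rows [2,-2,-10,-14,-10,-2], [-2,2,-2,-10,-14,-10], [-10,-2,2,-2,-10,-14], [-14,-10,-2,2,-2,-10], [-10,-14,-10,-2,2,-2], [-2,-10,-14,-10,-2,2] satisfies: (a) it is a symmetric generalized Cartan matrix (symmetric, all diagonal entries 2, all off-diagonal entries nonpositive); (b) it has rank 3 over ℚ; (c) the real quadratic form x ↦ xᵀAx on ℝ⁶ is equivalent to the weighted sum of squares with weights (1,1,−1,0,0,0), i.e. A is hyperbolic of rank 3; (d) there exists c ∈ ℚ⁶ with Ac = −(1,…,1)ᵀ and cᵀAc < 0 (a lattice Weyl vector of negative square). -/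

import Mathlib

open Matrix

/-- The matrix `A_{3,II}`. -/
def auxA : Matrix (Fin 6) (Fin 6) ℤ :=
  !![2, -2, -10, -14, -10, -2;
    -2, 2, -2, -10, -14, -10;
    -10, -2, 2, -2, -10, -14;
    -14, -10, -2, 2, -2, -10;
    -10, -14, -10, -2, 2, -2;
    -2, -10, -14, -10, -2, 2]

/-- Columns: an orthogonal eigenbasis of the circulant matrix. -/
def auxQ : Matrix (Fin 6) (Fin 6) ℤ :=
  !![2, 0, 1, 2, 0, 1;
    1, 1, 1, -1, 1, -1;
    -1, 1, 1, -1, -1, 1;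
    -2, 0, 1, 2, 0, -1;
    -1, -1, 1, -1, 1, 1;
    1, -1, 1, -1, -1, -1]

theorem auxQ_mul : auxQᵀ * auxQ = diagonal ![12, 4, 6, 12, 4, 6] := by decide +kernel

theorem auxQ_congr : auxQᵀ * auxA * auxQ = diagonal ![288, 96, -216, 0, 0, 0] := by
  decide +kernel

theorem auxQ_det : auxQ.det ≠ 0 := by
  intro h
  have := congrArg Matrix.det auxQ_mul
  rw [det_mul, h, mul_zero, det_diagonal] at this
  revert this
  decide

theorem auxQ_det_map {K : Type*} [Field K] [CharZero K] :
    IsUnit (auxQ.map ((↑·) : ℤ → K)).det := by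
  have h : (auxQ.map ((↑·) : ℤ → K)).det = ((auxQ.det : ℤ) : K) :=
    ((Int.castRingHom K).map_det auxQ).symm
  rw [h, isUnit_iff_ne_zero]
  exact_mod_cast auxQ_det

theorem auxQ_congr_map {K : Type*} [Field K] [CharZero K] :
    (auxQ.map ((↑·) : ℤ → K))ᵀ * auxA.map ((↑·) : ℤ → K) * auxQ.map ((↑·) : ℤ → K)
      = diagonal ![288, 96, -216, 0, 0, 0] := by
  have h := congrArg (fun M : Matrix (Fin 6) (Fin 6) ℤ => M.map (Int.castRingHom K)) auxQ_congr
  simp only [Matrix.map_mul] at h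
  refine Eq.trans h ?_
  rw [diagonal_map (map_zero _)]
  congr 1
  ext i
  fin_cases i <;> simp

theorem auxA_rank : (auxA.map ((↑·) : ℤ → ℚ)).rank = 3 := by
  have h := congrArg Matrix.rank (auxQ_congr_map (K := ℚ))
  rw [rank_mul_eq_left_of_isUnit_det _ _ auxQ_det_map,
    rank_mul_eq_right_of_isUnit_det _ _ (by rw [det_transpose]; exact auxQ_det_map),
    rank_diagonal] at h
  rw [h]
  decide +kernel

theorem auxA_off : ∀ i j : Fin 6, i = j ∨ auxA i j ≤ 0 := by
  intro i j
  fin_cases i <;> fin_cases j <;> simp [auxA]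

theorem auxA_gcm : auxAᵀ = auxA ∧ (∀ i, auxA i i = 2) ∧ (∀ i j, i ≠ j → auxA i j ≤ 0) :=
  ⟨by decide +kernel, by decide +kernel, fun i j hij => (auxA_off i j).resolve_left hij⟩

theorem auxA_sig : ∃ P : Matrix (Fin 6) (Fin 6) ℝ, IsUnit P.det ∧
    Pᵀ * auxA.map ((↑·) : ℤ → ℝ) * P = Matrix.diagonal ![(1:ℝ),1,-1,0,0,0] := by
  refine ⟨auxQ.map ((↑·) : ℤ → ℝ) *
    diagonal ![(√288)⁻¹, (√96)⁻¹, (√216)⁻¹, 1, 1, 1], ?_, ?_⟩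
  · rw [det_mul, det_diagonal]
    refine auxQ_det_map.mul ?_
    rw [isUnit_iff_ne_zero, Finset.prod_ne_zero_iff]
    intro i _
    fin_cases i <;> simp
  · rw [transpose_mul, diagonal_transpose]
    have h := auxQ_congr_map (K := ℝ)
    rw [← Matrix.mul_assoc, Matrix.mul_assoc (diagonal _), Matrix.mul_assoc (diagonal _), h,
      diagonal_mul_diagonal, diagonal_mul_diagonal]
    have key : ∀ a : ℝ, 0 < a → (√a)⁻¹ * a * (√a)⁻¹ = 1 := by
      intro a ha
      have h1 : √a ≠ 0 := (Real.sqrt_pos.2 ha).ne'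
      have h2 := Real.mul_self_sqrt ha.le
      field_simp
      nlinarith
    congr 1
    ext i
    fin_cases i
    · exact key 288 (by norm_num)
    · exact key 96 (by norm_num)
    · have := key 216 (by norm_num)
      change (√216)⁻¹ * (-216) * (√216)⁻¹ = (-1 : ℝ)
      linarith
    all_goals simp

/-- The matrix `A_{3,II}` from Nikulin's list of all twelve symmetric hyperbolic
generalized Cartan matrices of rank 3 with finite-volume fundamental chamber and
lattice Weyl vector of negative square:
(a) it is a symmetric generalized Cartan matrix;
(b) it has rank 3 over ℚ;
(c) the real quadratic form x ↦ xᵀAx is equivalent to the weighted sum of squares with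
    weights (1,1,-1,0,…,0), i.e. A is hyperbolic of rank 3;
(d) it has a lattice Weyl vector of negative square: there is c ∈ ℚ^6 with
    Ac = -(1,…,1)ᵀ and cᵀAc < 0. -/
theorem stmt_10 :
    let A : Matrix (Fin 6) (Fin 6) ℤ :=
      !![2, -2, -10, -14, -10, -2;
        -2, 2, -2, -10, -14, -10;
        -10, -2, 2, -2, -10, -14;
        -14, -10, -2, 2, -2, -10;
        -10, -14, -10, -2, 2, -2;
        -2, -10, -14, -10, -2, 2]
    -- (a) symmetric generalized Cartan matrix
    (Aᵀ = A ∧ (∀ i, A i i = 2) ∧ (∀ i j, i ≠ j → A i j ≤ 0)) ∧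
    -- (b) rank 3 over ℚ
    (A.map ((↑·) : ℤ → ℚ)).rank = 3 ∧
    -- (c) hyperbolic of rank 3: x ↦ xᵀAx over ℝ is equivalent to the weighted
    -- sum of squares with weights (1,1,-1,0,…,0)
    (∃ P : Matrix (Fin 6) (Fin 6) ℝ, IsUnit P.det ∧
      Pᵀ * A.map ((↑·) : ℤ → ℝ) * P = Matrix.diagonal ![(1:ℝ),1,-1,0,0,0]) ∧
    -- (d) lattice Weyl vector of negative square
    (∃ c : Fin 6 → ℚ, (∀ i, (A.map ((↑·) : ℤ → ℚ)).mulVec c i = -1) ∧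
      c ⬝ᵥ (A.map ((↑·) : ℤ → ℚ)).mulVec c < 0) := by
  intro A
  refine ⟨auxA_gcm, auxA_rank, auxA_sig, fun _ => 1 / 36, ?_, ?_⟩
  · decide +kernel
  · decide +kernel
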